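/- A Gini mean G_{p,q} on (0,∞) is a weak-Hardy mean if and only if min(p,q) ≤ 0 and max(p,q) < 1, which holds if and only if G_{p,q} is a Hardy mean. -/

import Mathlib

open Finset in
/-- The Gini mean `G_{p,q}` of a tuple of positive reals. -/
noncomputable def gini (p q : ℝ) (n : ℕ) (a : Fin n → ℝ) : ℝ :=
  if p = q then
    Real.exp ((∑ i, a i ^ p * Real.log (a i)) / (∑ i, a i ^ p))
  else
    ((∑ i, a i ^ p) / (∑ i, a i ^ q)) ^ (1 / (p - q))

/-- The Gini mean `G_{p,q}` is a weak-Hardy mean: the running means of every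
summable positive sequence form a summable sequence. -/
def GiniWeakHardy (p q : ℝ) : Prop :=
  ∀ a : ℕ → ℝ, (∀ n, 0 < a n) → Summable a →
    Summable (fun n => gini p q (n + 1) (fun k : Fin (n + 1) => a (k : ℕ)))

/-- The Gini mean `G_{p,q}` is a Hardy mean: there is a finite constant `C`
bounding the sum of running means by `C` times the sum. -/
def GiniHardy (p q : ℝ) : Prop :=
  ∃ C : ℝ, ∀ a : ℕ → ℝ, (∀ n, 0 < a n) → Summable a →
    Summable (fun n => gini p q (n + 1) (fun k : Fin (n + 1) => a (k : ℕ))) ∧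
    ∑' n, gini p q (n + 1) (fun k : Fin (n + 1) => a (k : ℕ)) ≤ C * ∑' n, a n

/-! ### Log-convexity of power sums and monotonicity of Gini means -/

lemma sum_rpow_pos {n : ℕ} {a : Fin (n + 1) → ℝ} (ha : ∀ i, 0 < a i) (t : ℝ) :
    0 < ∑ i, a i ^ t :=
  Finset.sum_pos (fun i _ => Real.rpow_pos_of_pos (ha i) t) Finset.univ_nonempty

lemma convexOn_log_sum_rpow {n : ℕ} {a : Fin (n + 1) → ℝ} (ha : ∀ i, 0 < a i) :
    ConvexOn ℝ Set.univ (fun t : ℝ => Real.log (∑ i, a i ^ t)) := by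
  refine convexOn_iff_forall_pos.2 ⟨convex_univ, fun x _ y _ u v hu hv huv => ?_⟩
  have hx := sum_rpow_pos ha x
  have hy := sum_rpow_pos ha y
  have hconj : (1 / u).HolderConjugate (1 / v) := by
    rw [Real.holderConjugate_iff]
    refine ⟨(one_lt_div hu).2 (by linarith), by simpa using huv⟩
  have key := Real.inner_le_Lp_mul_Lq_of_nonneg Finset.univ hconj
    (f := fun i => (a i ^ x) ^ u) (g := fun i => (a i ^ y) ^ v)
    (fun i _ => (Real.rpow_pos_of_pos (Real.rpow_pos_of_pos (ha i) x) u).le)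
    (fun i _ => (Real.rpow_pos_of_pos (Real.rpow_pos_of_pos (ha i) y) v).le)
  have cancel : ∀ (t w : ℝ), 0 < w → ∀ i, ((a i ^ t) ^ w) ^ (1 / w) = a i ^ t := fun t w hw i => by
    rw [one_div, Real.rpow_rpow_inv (Real.rpow_pos_of_pos (ha i) t).le hw.ne']
  simp only [cancel x u hu, cancel y v hv, one_div_one_div] at key
  have split : ∀ i, a i ^ (u • x + v • y) = (a i ^ x) ^ u * (a i ^ y) ^ v := fun i => by
    rw [Real.rpow_add (ha i), ← Real.rpow_mul (ha i).le, ← Real.rpow_mul (ha i).le, smul_eq_mul,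
      smul_eq_mul, mul_comm u, mul_comm v]
  simp only [← split] at key
  have := Real.log_le_log (sum_rpow_pos ha _) key
  rwa [Real.log_mul (Real.rpow_pos_of_pos hx u).ne' (Real.rpow_pos_of_pos hy v).ne',
    Real.log_rpow hx, Real.log_rpow hy] at this

lemma hasDerivAt_log_sum_rpow {n : ℕ} {a : Fin (n + 1) → ℝ} (ha : ∀ i, 0 < a i) (t : ℝ) :
    HasDerivAt (fun t : ℝ => Real.log (∑ i, a i ^ t))
      ((∑ i, a i ^ t * Real.log (a i)) / ∑ i, a i ^ t) t :=
  (HasDerivAt.fun_sum fun i _ => Real.hasStrictDerivAt_const_rpow (ha i) t |>.hasDerivAt).log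
    (sum_rpow_pos ha t).ne'

lemma gini_of_ne {n : ℕ} {a : Fin (n + 1) → ℝ} (ha : ∀ i, 0 < a i) {p q : ℝ} (h : p ≠ q) :
    gini p q (n + 1) a =
      Real.exp ((Real.log (∑ i, a i ^ p) - Real.log (∑ i, a i ^ q)) / (p - q)) := by
  have hp := sum_rpow_pos ha p
  have hq := sum_rpow_pos ha q
  rw [gini, if_neg h, Real.rpow_def_of_pos (div_pos hp hq), Real.log_div hp.ne' hq.ne',
    mul_one_div]

lemma gini_pos {n : ℕ} {a : Fin (n + 1) → ℝ} (ha : ∀ i, 0 < a i) (p q : ℝ) :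
    0 < gini p q (n + 1) a := by
  by_cases h : p = q
  · rw [gini, if_pos h]
    exact Real.exp_pos _
  · rw [gini_of_ne ha h]
    exact Real.exp_pos _

lemma gini_comm {n : ℕ} {a : Fin (n + 1) → ℝ} (ha : ∀ i, 0 < a i) (p q : ℝ) :
    gini p q (n + 1) a = gini q p (n + 1) a := by
  by_cases h : p = q
  · rw [h]
  · rw [gini_of_ne ha h, gini_of_ne ha (Ne.symm h), ← neg_div_neg_eq, neg_sub, neg_sub]

lemma gini_mono_left {n : ℕ} {a : Fin (n + 1) → ℝ} (ha : ∀ i, 0 < a i) {x y : ℝ} (c : ℝ)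
    (hxy : x ≤ y) : gini x c (n + 1) a ≤ gini y c (n + 1) a := by
  have hconv := convexOn_log_sum_rpow ha
  have hderiv := hasDerivAt_log_sum_rpow ha c
  rcases hxy.eq_or_lt with rfl | hlt
  · exact le_rfl
  rcases eq_or_ne x c with rfl | hxc
  · rw [gini_of_ne ha hlt.ne', gini, if_pos rfl, Real.exp_le_exp]
    exact (hconv.le_slope_of_hasDerivAt trivial trivial hlt hderiv).trans_eq
      (slope_def_field _ _ _)
  rcases eq_or_ne y c with rfl | hyc
  · rw [gini_comm ha, gini_of_ne ha hlt.ne', gini, if_pos rfl, Real.exp_le_exp]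
    exact (slope_def_field _ _ _).symm.trans_le
      (hconv.slope_le_of_hasDerivAt trivial trivial hlt hderiv)
  · rw [gini_of_ne ha hxc, gini_of_ne ha hyc, Real.exp_le_exp]
    exact hconv.secant_mono trivial trivial trivial hxc hyc hxy

lemma gini_mono_right {n : ℕ} {a : Fin (n + 1) → ℝ} (ha : ∀ i, 0 < a i) (c : ℝ) {x y : ℝ}
    (hxy : x ≤ y) : gini c x (n + 1) a ≤ gini c y (n + 1) a := by
  rw [gini_comm ha c x, gini_comm ha c y]
  exact gini_mono_left ha c hxy

lemma giniWeakHardy_comm {p q : ℝ} (h : GiniWeakHardy p q) : GiniWeakHardy q p := by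
  intro a ha hs
  refine (h a ha hs).congr fun n => gini_comm (fun k => ha _) p q

lemma giniHardy_comm {p q : ℝ} (h : GiniHardy p q) : GiniHardy q p := by
  obtain ⟨C, hC⟩ := h
  refine ⟨C, fun a ha hs => ?_⟩
  simpa only [gini_comm (a := fun k : Fin (_ + 1) => a k) (fun k => ha k) q p] using hC a ha hs

/-! ### Sufficiency: Hardy's inequality for power means -/

lemma mul_rpow_sub_one_mul_le {s A Y : ℝ} (hs : 1 ≤ s) (hA : 0 < A) (hY : 0 ≤ Y) :
    s * A ^ (s - 1) * Y ≤ (s - 1) * A ^ s + Y ^ s := by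
  have h := one_add_mul_self_le_rpow_one_add (s := Y / A - 1)
    (by linarith [div_nonneg hY hA.le]) hs
  rw [add_sub_cancel, Real.div_rpow hY hA.le, le_div_iff₀ (Real.rpow_pos_of_pos hA s)] at h
  rw [Real.rpow_sub_one hA.ne']
  have e : (1 + s * (Y / A - 1)) * A ^ s = s * (A ^ s / A) * Y - (s - 1) * A ^ s := by
    field_simp
    ring
  linarith

/-- One step of Elliott's proof of Hardy's inequality. -/
lemma hardy_step {s A B b m : ℝ} (hs : 1 < s) (hA : 0 < A) (hB : 0 ≤ B) (hb : 0 ≤ b) (hm : 0 ≤ m)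
    (h : (m + 1) * A = m * B + b) :
    (s - 1) * A ^ s + 2 * (m + 1) * A ^ s ≤ 2 * m * B ^ s + 2 ^ s * b ^ s := by
  have h1 := mul_rpow_sub_one_mul_le hs.le hA hB
  have h2 := mul_rpow_sub_one_mul_le hs.le hA (mul_nonneg zero_le_two hb)
  rw [Real.mul_rpow zero_le_two hb] at h2
  have e : A ^ s = A ^ (s - 1) * A := by
    rw [← Real.rpow_add_one hA.ne', sub_add_cancel]
  have h3 : s * A ^ (s - 1) * (2 * ((m + 1) * A)) = s * A ^ (s - 1) * (2 * (m * B + b)) := by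
    rw [h]
  have h4 := mul_le_mul_of_nonneg_left h1 hm
  have h5 : s * A ^ (s - 1) * (2 * ((m + 1) * A)) = 2 * s * (m + 1) * A ^ s := by
    rw [e]; ring
  nlinarith

/-- Hardy's inequality for finite sums, with a crude constant. -/
lemma hardy_finite {s : ℝ} (hs : 1 < s) {b : ℕ → ℝ} (hb : ∀ n, 0 < b n) (N : ℕ) :
    (s - 1) * ∑ n ∈ Finset.range N, ((∑ k ∈ Finset.range (n + 1), b k) / (n + 1 : ℝ)) ^ s
      ≤ 2 ^ s * ∑ n ∈ Finset.range N, b n ^ s := by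
  suffices H : (s - 1) * ∑ n ∈ Finset.range N,
      ((∑ k ∈ Finset.range (n + 1), b k) / (n + 1 : ℝ)) ^ s
      + 2 * N * ((∑ k ∈ Finset.range N, b k) / N) ^ s ≤ 2 ^ s * ∑ n ∈ Finset.range N, b n ^ s by
    have h0 : 0 ≤ ∑ k ∈ Finset.range N, b k := Finset.sum_nonneg fun k _ => (hb k).le
    have : 0 ≤ 2 * N * ((∑ k ∈ Finset.range N, b k) / N) ^ s := by positivity
    linarith
  induction N with
  | zero => simp
  | succ N ih =>
    have h0 : 0 ≤ ∑ k ∈ Finset.range N, b k := Finset.sum_nonneg fun k _ => (hb k).le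
    have hpos : 0 < (∑ k ∈ Finset.range (N + 1), b k) / (N + 1 : ℝ) :=
      div_pos (Finset.sum_pos (fun k _ => hb k) (by simp)) (by positivity)
    have hrec : ((N : ℝ) + 1) * ((∑ k ∈ Finset.range (N + 1), b k) / (N + 1 : ℝ))
        = N * ((∑ k ∈ Finset.range N, b k) / N) + b N := by
      rw [mul_div_cancel₀ _ (by positivity), Finset.sum_range_succ]
      rcases Nat.eq_zero_or_pos N with rfl | hN
      · simp
      · rw [mul_div_cancel₀ _ (by positivity)]
    have := hardy_step hs hpos (div_nonneg h0 N.cast_nonneg) (hb N).le N.cast_nonneg hrec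
    rw [Finset.sum_range_succ, Finset.sum_range_succ (fun n => b n ^ s)]
    push_cast
    linarith

lemma gini_zero_right {r : ℝ} (hr : r ≠ 0) (a : ℕ → ℝ) (n : ℕ) :
    gini r 0 (n + 1) (fun k : Fin (n + 1) => a k) =
      ((∑ k ∈ Finset.range (n + 1), a k ^ r) / (n + 1 : ℝ)) ^ (1 / r) := by
  rw [gini, if_neg hr, ← Finset.sum_range (fun k => a k ^ r)]
  simp

lemma giniHardy_of_nonpos_of_lt_one {p q : ℝ} (hq : q ≤ 0) (hp : p < 1) : GiniHardy p q := by
  obtain ⟨r, hr, hr1⟩ := exists_between (max_lt hp (zero_lt_one (α := ℝ)))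
  obtain ⟨hpr, hr0⟩ := max_lt_iff.1 hr
  have hs : 1 < 1 / r := (one_lt_div hr0).2 hr1
  refine ⟨2 ^ (1 / r) / (1 / r - 1), fun a ha hsum => ?_⟩
  have bound : ∀ N, ∑ n ∈ Finset.range N, gini p q (n + 1) (fun k : Fin (n + 1) => a k) ≤
      2 ^ (1 / r) / (1 / r - 1) * ∑' n, a n := fun N => by
    have hle : ∀ n, gini p q (n + 1) (fun k : Fin (n + 1) => a k) ≤
        ((∑ k ∈ Finset.range (n + 1), a k ^ r) / (n + 1 : ℝ)) ^ (1 / r) := fun n =>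
      ((gini_mono_left (fun k => ha k) q hpr.le).trans
        (gini_mono_right (fun k => ha k) r hq)).trans (gini_zero_right hr0.ne' a n).le
    refine (Finset.sum_le_sum fun n _ => hle n).trans ?_
    have h := hardy_finite hs (fun n => Real.rpow_pos_of_pos (ha n) r) N
    have hcancel : ∀ n, (a n ^ r) ^ (1 / r) = a n := fun n => by
      rw [one_div, Real.rpow_rpow_inv (ha n).le hr0.ne']
    simp only [hcancel] at h
    rw [div_mul_eq_mul_div, le_div_iff₀ (sub_pos.2 hs), mul_comm]
    refine h.trans (mul_le_mul_of_nonneg_left ?_ (by positivity))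
    exact hsum.sum_le_tsum _ fun n _ => (ha n).le
  have hnn : ∀ n, 0 ≤ gini p q (n + 1) (fun k : Fin (n + 1) => a k) := fun n =>
    (gini_pos (fun k => ha k) p q).le
  exact ⟨summable_of_sum_range_le hnn bound, Real.tsum_le_of_sum_range_le hnn bound⟩

/-! ### Necessity: sequences with a divergent series of means -/

lemma inv_sum_rpow_le_gini {n : ℕ} {a : ℕ → ℝ} (ha : ∀ k, 0 < a k) (ha0 : a 0 = 1) {p q q' : ℝ}
    (hq : q' ≤ q) (hp : q' < p) :
    (1 / ∑ k ∈ Finset.range (n + 1), a k ^ q') ^ (1 / (p - q')) ≤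
      gini p q (n + 1) (fun k : Fin (n + 1) => a k) := by
  refine le_trans ?_ (gini_mono_right (fun k => ha k) p hq)
  rw [gini, if_neg hp.ne', ← Finset.sum_range (fun k => a k ^ p),
    ← Finset.sum_range (fun k => a k ^ q')]
  have hnn : ∀ t : ℝ, 0 ≤ ∑ k ∈ Finset.range (n + 1), a k ^ t := fun t =>
    Finset.sum_nonneg fun k _ => (Real.rpow_pos_of_pos (ha k) t).le
  have h1 : 1 ≤ ∑ k ∈ Finset.range (n + 1), a k ^ p := by
    have := Finset.single_le_sum (f := fun k => a k ^ p) (s := Finset.range (n + 1))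
      (fun k _ => (Real.rpow_pos_of_pos (ha k) p).le) (Finset.mem_range.2 n.succ_pos)
    simpa [ha0] using this
  refine Real.rpow_le_rpow (div_nonneg zero_le_one (hnn _)) ?_ (one_div_nonneg.2 (by linarith))
  exact div_le_div_of_nonneg_right h1 (hnn _)

lemma not_giniWeakHardy_of_pos {p q : ℝ} (hq : 0 < q) (hqp : q ≤ p) : ¬ GiniWeakHardy p q := by
  intro h
  set a : ℕ → ℝ := fun n => (1 / 2) ^ n with ha_def
  have ha : ∀ n, 0 < a n := fun n => by positivity
  have hlim := (h a ha summable_geometric_two).tendsto_atTop_zero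
  have hpow : ∀ n, a n ^ (q / 2) = ((1 / 2 : ℝ) ^ (q / 2)) ^ n := fun n => by
    simp only [ha_def]
    rw [← Real.rpow_natCast, ← Real.rpow_natCast, ← Real.rpow_mul (by norm_num),
      ← Real.rpow_mul (by norm_num), mul_comm]
  have hsum : Summable fun n => a n ^ (q / 2) := by
    simp only [hpow]
    exact summable_geometric_of_lt_one (by positivity)
      (Real.rpow_lt_one (by norm_num) (by norm_num) (by linarith))
  have hpos : ∀ n, 0 < a n ^ (q / 2) := fun n => Real.rpow_pos_of_pos (ha n) _
  have hS : 0 < ∑' n, a n ^ (q / 2) := hsum.tsum_pos (fun n => (hpos n).le) 0 (hpos 0)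
  have hlow : (1 / ∑' n, a n ^ (q / 2)) ^ (1 / (p - q / 2)) ≤ 0 := by
    refine ge_of_tendsto' hlim fun n => ?_
    refine le_trans ?_ (inv_sum_rpow_le_gini (q' := q / 2) ha (by simp [ha_def]) (by linarith)
      (by linarith))
    refine Real.rpow_le_rpow (by positivity) ?_ (one_div_nonneg.2 (by linarith))
    exact one_div_le_one_div_of_le (Finset.sum_pos (fun k _ => hpos k) (by simp))
      (hsum.sum_le_tsum _ fun k _ => (hpos k).le)
  exact hlow.not_gt (by positivity)

/-- `n ↦ 1 / (n (1 + ⌊log₂ n⌋) ^ β)`, a discrete form of `1 / (x log x ^ β)`. -/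
noncomputable def invMulLogRpow (β : ℝ) (n : ℕ) : ℝ :=
  1 / (n * (1 + Nat.log 2 n : ℝ) ^ β)

lemma invMulLogRpow_antitone {β : ℝ} (hβ : 0 ≤ β) ⦃m n : ℕ⦄ (hm : 0 < m) (hmn : m ≤ n) :
    invMulLogRpow β n ≤ invMulLogRpow β m := by
  have hlog : (Nat.log 2 m : ℝ) ≤ Nat.log 2 n := by exact_mod_cast Nat.log_mono_right hmn
  have hm' : (0 : ℝ) < m := by exact_mod_cast hm
  have hmn' : (m : ℝ) ≤ n := by exact_mod_cast hmn
  unfold invMulLogRpow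
  gcongr

lemma summable_invMulLogRpow_iff {β : ℝ} (hβ : 0 ≤ β) :
    Summable (invMulLogRpow β) ↔ 1 < β := by
  rw [← summable_condensed_iff_of_nonneg (fun n => by unfold invMulLogRpow; positivity)
    (invMulLogRpow_antitone hβ), ← Real.summable_one_div_nat_rpow,
    ← summable_nat_add_iff (f := fun n : ℕ => 1 / (n : ℝ) ^ β) 1]
  refine summable_congr fun k => ?_
  rw [invMulLogRpow, Nat.log_pow one_lt_two]
  push_cast
  field_simp
  rw [add_comm]

lemma not_giniWeakHardy_of_one_le {p q : ℝ} (hp : 1 ≤ p) : ¬ GiniWeakHardy p q := by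
  intro h
  obtain ⟨u, hu, hq⟩ : ∃ u : ℝ, 0 < u ∧ -u ≤ q :=
    ⟨max 1 (-q), by positivity, neg_le.1 (le_max_right _ _)⟩
  set β : ℝ := (1 + u) / u with hβ_def
  have hβ : 1 < β := (one_lt_div hu).2 (by linarith)
  have hβ0 : 0 ≤ β := by linarith
  set a : ℕ → ℝ := fun n => invMulLogRpow β (n + 1) with ha_def
  have ha : ∀ n, 0 < a n := fun n => by
    simp only [ha_def, invMulLogRpow]
    positivity
  have hsum := h a ha ((summable_nat_add_iff 1).2 ((summable_invMulLogRpow_iff hβ0).2 hβ))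
  refine (summable_invMulLogRpow_iff zero_le_one).not.2 (lt_irrefl 1)
    ((summable_nat_add_iff 1).1 (hsum.of_nonneg_of_le (fun n => ?_) fun n => ?_))
  · unfold invMulLogRpow
    positivity
  refine le_trans ?_ (inv_sum_rpow_le_gini (q' := -u) ha (by simp [ha_def, invMulLogRpow]) hq
    (by linarith))
  set x : ℝ := ((n + 1 : ℕ) : ℝ) with hx
  set L : ℝ := 1 + (Nat.log 2 (n + 1) : ℝ) with hL
  have hx1 : 1 ≤ x := by simp [hx]
  have hL1 : 1 ≤ L := by simp [hL]
  have hx0 : 0 < x := by linarith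
  have hL0 : 0 < L := by linarith
  have hS : ∑ k ∈ Finset.range (n + 1), a k ^ (-u) ≤ (x * L) ^ (1 + u) := by
    have hterm : ∀ k ∈ Finset.range (n + 1), a k ^ (-u) ≤ a n ^ (-u) := fun k hk =>
      Real.rpow_le_rpow_of_nonpos (ha n) (invMulLogRpow_antitone hβ0 k.succ_pos
        (by simpa using Finset.mem_range.1 hk)) (by linarith)
    refine (Finset.sum_le_card_nsmul _ _ _ hterm).trans (le_of_eq ?_)
    have han : a n ^ (-u) = (x * L ^ β) ^ u := by
      rw [Real.rpow_neg (ha n).le, ← Real.inv_rpow (ha n).le,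
        show a n = 1 / (x * L ^ β) from rfl, one_div, inv_inv]
    rw [han, Finset.card_range, nsmul_eq_mul, Real.mul_rpow hx0.le (by positivity),
      ← Real.rpow_mul hL0.le, hβ_def, div_mul_cancel₀ _ hu.ne', Real.mul_rpow hx0.le hL0.le,
      Real.rpow_add hx0, Real.rpow_one, mul_assoc]
  have hS0 : 0 < ∑ k ∈ Finset.range (n + 1), a k ^ (-u) :=
    Finset.sum_pos (fun k _ => Real.rpow_pos_of_pos (ha k) _) (by simp)
  have hxL : 1 ≤ x * L := one_le_mul_of_one_le_of_one_le hx1 hL1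
  rw [sub_neg_eq_add, one_div (Finset.sum _ _), Real.inv_rpow hS0.le, invMulLogRpow, Real.rpow_one,
    ← one_div (_ ^ _)]
  refine one_div_le_one_div_of_le (by positivity) ?_
  calc _ ≤ ((x * L) ^ (1 + u)) ^ (1 / (p + u)) :=
        Real.rpow_le_rpow hS0.le hS (one_div_nonneg.2 (by linarith))
    _ = (x * L) ^ ((1 + u) / (p + u)) := by
        rw [← Real.rpow_mul (by positivity), mul_one_div]
    _ ≤ (x * L) ^ (1 : ℝ) := Real.rpow_le_rpow_of_exponent_le hxL
        ((div_le_one (by linarith)).2 (by linarith))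
    _ = x * L := Real.rpow_one _

lemma nonpos_and_lt_one_of_giniWeakHardy {p q : ℝ} (hqp : q ≤ p) (h : GiniWeakHardy p q) :
    q ≤ 0 ∧ p < 1 :=
  ⟨not_lt.1 fun hq => not_giniWeakHardy_of_pos hq hqp h,
    not_le.1 fun hp => not_giniWeakHardy_of_one_le hp h⟩

theorem stmt_10 (p q : ℝ) :
    (GiniWeakHardy p q ↔ (min p q ≤ 0 ∧ max p q < 1)) ∧
    (GiniWeakHardy p q ↔ GiniHardy p q) := by
  have weak_of_hardy : GiniHardy p q → GiniWeakHardy p q := fun ⟨_, hC⟩ a ha hs => (hC a ha hs).1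
  have cond_of_weak : GiniWeakHardy p q → min p q ≤ 0 ∧ max p q < 1 := fun h => by
    rcases le_total q p with hqp | hpq
    · rw [min_eq_right hqp, max_eq_left hqp]
      exact nonpos_and_lt_one_of_giniWeakHardy hqp h
    · rw [min_eq_left hpq, max_eq_right hpq]
      exact nonpos_and_lt_one_of_giniWeakHardy hpq (giniWeakHardy_comm h)
  have hardy_of_cond : min p q ≤ 0 ∧ max p q < 1 → GiniHardy p q := fun ⟨h1, h2⟩ => by
    obtain ⟨hp, hq⟩ := max_lt_iff.1 h2
    rcases min_le_iff.1 h1 with h0 | h0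
    · exact giniHardy_comm (giniHardy_of_nonpos_of_lt_one h0 hq)
    · exact giniHardy_of_nonpos_of_lt_one h0 hp
  exact ⟨⟨cond_of_weak, fun h => weak_of_hardy (hardy_of_cond h)⟩,
    fun h => hardy_of_cond (cond_of_weak h), weak_of_hardy⟩
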